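/- There is a constant c (independent of the game) such that every coordination game without bonuses on an unweighted open chain of m cycles, each cycle having n nodes, admits, from every joint strategy, a finite c-improvement path of length at most c·n·m³ (hence ending in a strong equilibrium). -/

import Mathlib

open scoped Classical

namespace CG

/-- Payoff of node `i` in a coordination game on a weighted directed graph
with adjacency `adj` (an edge `j → i` is `adj j i`), edge weights `w`,
bonuses `β`, under the joint strategy `s`. -/
noncomputable def payoff {V M : Type} [Fintype V] (adj : V → V → Prop)
    (w : V → V → ℝ) (β : V → M → ℕ) (s : V → M) (i : V) : ℝ :=
  (∑ j ∈ Finset.univ.filter (fun j => adj j i ∧ s j = s i), w j i) + (β i (s i) : ℝ)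

/-- A joint strategy assigns to every node a colour from its colour set. -/
def Valid {V M : Type} (C : V → Finset M) (s : V → M) : Prop :=
  ∀ i, s i ∈ C i

/-- `s'` is a profitable deviation of the (non-empty) coalition
`K = {i | s i ≠ s' i}` from `s`. -/
def ProfDev {V M : Type} [Fintype V] (adj : V → V → Prop) (w : V → V → ℝ)
    (β : V → M → ℕ) (C : V → Finset M) (s s' : V → M) : Prop :=
  Valid C s' ∧ s ≠ s' ∧
    ∀ i, s i ≠ s' i → payoff adj w β s i < payoff adj w β s' i

/-- A profitable deviation of a single player. -/
def UniDev {V M : Type} [Fintype V] (adj : V → V → Prop) (w : V → V → ℝ)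
    (β : V → M → ℕ) (C : V → Finset M) (s s' : V → M) : Prop :=
  ProfDev adj w β C s s' ∧ ∃ i, ∀ j, j ≠ i → s j = s' j

/-- A Nash equilibrium: no single player has a profitable deviation. -/
def IsNash {V M : Type} [Fintype V] (adj : V → V → Prop) (w : V → V → ℝ)
    (β : V → M → ℕ) (C : V → Finset M) (s : V → M) : Prop :=
  Valid C s ∧ ∀ s', ¬ UniDev adj w β C s s'

/-- A strong equilibrium: no coalition has a profitable deviation. -/
def IsStrong {V M : Type} [Fintype V] (adj : V → V → Prop) (w : V → V → ℝ)
    (β : V → M → ℕ) (C : V → Finset M) (s : V → M) : Prop :=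
  Valid C s ∧ ∀ s', ¬ ProfDev adj w β C s s'

/-- There is a finite improvement path of length `L` starting at `s`
(each step a profitable single-player deviation) ending in a Nash equilibrium. -/
def ImpPath {V M : Type} [Fintype V] (adj : V → V → Prop) (w : V → V → ℝ)
    (β : V → M → ℕ) (C : V → Finset M) (s : V → M) (L : ℕ) : Prop :=
  ∃ σ : ℕ → V → M, σ 0 = s ∧
    (∀ t, t < L → UniDev adj w β C (σ t) (σ (t + 1))) ∧
    IsNash adj w β C (σ L)

/-- There is a finite c-improvement path of length `L` starting at `s`
(each step a profitable coalition deviation) ending in a strong equilibrium. -/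
def CImpPath {V M : Type} [Fintype V] (adj : V → V → Prop) (w : V → V → ℝ)
    (β : V → M → ℕ) (C : V → Finset M) (s : V → M) (L : ℕ) : Prop :=
  ∃ σ : ℕ → V → M, σ 0 = s ∧
    (∀ t, t < L → ProfDev adj w β C (σ t) (σ (t + 1))) ∧
    IsStrong adj w β C (σ L)

/-- Adjacency of the simple cycle `1 → 2 → ⋯ → n → 1` on `Fin n`. -/
def cycAdj (n : ℕ) : Fin n → Fin n → Prop :=
  fun i j => (i.val + 1) % n = j.val

/-- Adjacency of a chain of `m` cycles, each of `n` nodes: `node j i` is the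
`(i+1)`-st node of the `(j+1)`-st cycle (`0`-based indices). -/
def chainAdj {V : Type} (m n : ℕ) (node : ℕ → ℕ → V) : V → V → Prop :=
  fun u v => ∃ j i, j < m ∧ i < n ∧ u = node j i ∧ v = node j ((i + 1) % n)

/-- `node`, `k` describe an open chain of `m ≥ 2` simple cycles, each on `n ≥ 3`
nodes, where consecutive cycles `C_j, C_{j+1}` share exactly the node
`node j 0 = node (j+1) (k j)` (with `1 ≤ k j < n`) and the cycles are
otherwise pairwise disjoint, and every vertex lies on some cycle. -/
def IsOpenChain {V : Type} (m n : ℕ) (node : ℕ → ℕ → V) (k : ℕ → ℕ) : Prop :=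
  2 ≤ m ∧ 3 ≤ n ∧
  (∀ j, j + 1 < m → 1 ≤ k j ∧ k j < n) ∧
  (∀ j, j + 1 < m → node j 0 = node (j + 1) (k j)) ∧
  (∀ j i j' i', j < m → i < n → j' < m → i' < n → node j i = node j' i' →
      (j = j' ∧ i = i') ∨ (j' = j + 1 ∧ i = 0 ∧ i' = k j) ∨
      (j = j' + 1 ∧ i' = 0 ∧ i = k j')) ∧
  (∀ v : V, ∃ j i, j < m ∧ i < n ∧ node j i = v)

/-- As `IsOpenChain`, but additionally the last cycle shares exactly the node
`node (m-1) 0 = node 0 (k (m-1))` with the first one. -/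
def IsClosedChain {V : Type} (m n : ℕ) (node : ℕ → ℕ → V) (k : ℕ → ℕ) : Prop :=
  2 ≤ m ∧ 3 ≤ n ∧
  (∀ j, j < m → 1 ≤ k j ∧ k j < n) ∧
  (∀ j, j + 1 < m → node j 0 = node (j + 1) (k j)) ∧
  node (m - 1) 0 = node 0 (k (m - 1)) ∧
  (∀ j i j' i', j < m → i < n → j' < m → i' < n → node j i = node j' i' →
      (j = j' ∧ i = i') ∨ (j' = j + 1 ∧ i = 0 ∧ i' = k j) ∨
      (j = j' + 1 ∧ i' = 0 ∧ i = k j') ∨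
      (j = m - 1 ∧ j' = 0 ∧ i = 0 ∧ i' = k (m - 1)) ∨
      (j' = m - 1 ∧ j = 0 ∧ i' = 0 ∧ i = k (m - 1))) ∧
  (∀ v : V, ∃ j i, j < m ∧ i < n ∧ node j i = v)

/-!
A coalition deviation never breaks a monochromatic cycle, since some node of it has no predecessor
off the cycle. If no node gains by moving alone from payoff zero, then every deviator takes the
colour of another deviator; following these backwards closes a cycle, which has just become
monochromatic. So at most `m` times one has to reach such a state, by single moves only.

To this end the arcs of the chain are swept in order. After one pass over the chain, instability can
only sit at the second node of some cycles and at one first node. In the latter case the next arc is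
swept; otherwise the last cycle with an unstable second node is. A sweep of a cycle changes its last
node only by going all the way round, so that the cycle becomes monochromatic unless the node shared
with the previous cycle has taken over the colour of that cycle. A potential counting the first
nodes that could still do so, weighted by their distance to the end of the chain, bounds the number
of sweeps by a multiple of `m ^ 2`, each of them having at most `n` moves.
-/

section Paths

variable {α : Type*} {r : α → α → Prop} {N N' : ℕ} {a b c : α}

/-- `ReachesWithin r N a b`: `b` can be reached from `a` by a path of at most `N` steps of `r`. The
slack in the length sits in the trivial path. -/
inductive ReachesWithin (r : α → α → Prop) : ℕ → α → α → Prop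
  | refl (N : ℕ) (a : α) : ReachesWithin r N a a
  | head {N : ℕ} {a b c : α} : r a b → ReachesWithin r N b c → ReachesWithin r (N + 1) a c

namespace ReachesWithin

theorem single (h : r a b) : ReachesWithin r 1 a b :=
  .head h (.refl 0 b)

theorem mono (h : ReachesWithin r N a b) (hN : N ≤ N') : ReachesWithin r N' a b := by
  induction h generalizing N' with
  | refl => exact .refl _ _
  | head hab _ ih =>
    obtain ⟨N', rfl⟩ := Nat.exists_eq_add_of_le' (Nat.one_le_of_lt hN)
    exact .head hab (ih (Nat.le_of_succ_le_succ hN))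

theorem trans (h : ReachesWithin r N a b) (h' : ReachesWithin r N' b c) :
    ReachesWithin r (N + N') a c := by
  induction h with
  | refl N => exact h'.mono (Nat.le_add_left N' N)
  | @head N _ _ _ hab _ ih => exact (head hab (ih h')).mono (by omega)

theorem preserves {P : α → Prop} (h : ReachesWithin r N a b)
    (hP : ∀ ⦃x y⦄, r x y → P x → P y) (ha : P a) : P b := by
  induction h with
  | refl => exact ha
  | head hab _ ih => exact ih (hP hab ha)

end ReachesWithin

end Paths

section Unweighted

variable {V M : Type} {adj : V → V → Prop} {C : V → Finset M} {s s' : V → M} {x : V}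

/-- Profitable deviations of coalitions in the unweighted game without bonuses. -/
abbrev Deviates [Fintype V] (adj : V → V → Prop) (C : V → Finset M) (s s' : V → M) : Prop :=
  ProfDev adj (fun _ _ => 1) (fun _ _ => 0) C s s'

/-- The predecessors of `x` that play the colour of `x`; their number is the payoff of `x` in the
unweighted game without bonuses. -/
noncomputable def supporters [Fintype V] (adj : V → V → Prop) (s : V → M) (x : V) : Finset V :=
  {p | adj p x ∧ s p = s x}

theorem mem_supporters [Fintype V] {p : V} : p ∈ supporters adj s x ↔ adj p x ∧ s p = s x := by
  simp only [supporters, Finset.mem_filter, Finset.mem_univ, true_and]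

theorem payoff_unweighted [Fintype V] (adj : V → V → Prop) (s : V → M) (x : V) :
    payoff adj (fun _ _ => 1) (fun _ _ => 0) s x = (supporters adj s x).card := by
  simp [payoff, supporters]

theorem Deviates.card_supporters_lt [Fintype V] (hd : Deviates adj C s s') (hx : s x ≠ s' x) :
    (supporters adj s x).card < (supporters adj s' x).card := by
  have := hd.2.2 x hx
  rwa [payoff_unweighted, payoff_unweighted, Nat.cast_lt] at this

theorem Deviates.exists_supporter [Fintype V] (hd : Deviates adj C s s') (hx : s x ≠ s' x) :
    ∃ p, adj p x ∧ s' p = s' x := by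
  obtain ⟨p, hp⟩ := Finset.card_pos.1 (Nat.zero_lt_of_lt (hd.card_supporters_lt hx))
  exact ⟨p, mem_supporters.1 hp⟩

theorem Deviates.one_lt_card_supporters [Fintype V] (hd : Deviates adj C s s') (hx : s x ≠ s' x)
    {q : V} (hq : adj q x) (hqx : s q = s x) : 1 < (supporters adj s' x).card :=
  (Nat.succ_le_of_lt (Finset.card_pos.2 ⟨q, mem_supporters.2 ⟨hq, hqx⟩⟩)).trans_lt
    (hd.card_supporters_lt hx)

theorem Deviates.eq_of_adj [Fintype V] (hd : Deviates adj C s s') (hx : s x ≠ s' x)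
    (hdeg : ({p | adj p x} : Finset V).card ≤ 2) {q : V} (hq : adj q x) (hqx : s q = s x) :
    s' q = s' x := by
  have hsub : supporters adj s' x ⊆ ({p | adj p x} : Finset V) := fun p hp => by
    simpa using (mem_supporters.1 hp).1
  have heq := Finset.eq_of_subset_of_card_le hsub
    (hdeg.trans (hd.one_lt_card_supporters hx hq hqx))
  exact (mem_supporters.1 (heq ▸ Finset.mem_filter.2 ⟨Finset.mem_univ q, hq⟩)).2

/-- Node `x` has no supporter but could gain one by moving alone to an available colour. Moves of a
node that already has a supporter are deliberately not covered. -/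
def Unstable (adj : V → V → Prop) (C : V → Finset M) (s : V → M) (x : V) : Prop :=
  (∀ p, adj p x → s p ≠ s x) ∧ ∃ p, adj p x ∧ s p ∈ C x

theorem Unstable.congr (h : Unstable adj C s x) (hx : s' x = s x)
    (hp : ∀ p, adj p x → s' p = s p) : Unstable adj C s' x := by
  obtain ⟨hne, p, hpx, hpC⟩ := h
  exact ⟨fun q hq => by rw [hp q hq, hx]; exact hne q hq, p, hpx, by rwa [hp p hpx]⟩

theorem Deviates.exists_deviating_supporter [Fintype V] (hd : Deviates adj C s s')
    (hx : s x ≠ s' x) (hst : ¬ Unstable adj C s x)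
    (hdeg : ({p | adj p x} : Finset V).card ≤ 2) :
    ∃ p, adj p x ∧ s p ≠ s' p ∧ s' p = s' x := by
  obtain ⟨p, hp, hpx⟩ := hd.exists_supporter hx
  by_cases hps : s p = s' p
  · obtain ⟨q, hq, hqx⟩ : ∃ q, adj q x ∧ s q = s x := by
      by_contra! hcon
      exact hst ⟨hcon, p, hp, by rw [hps, hpx]; exact hd.1 x⟩
    have hqs := hd.eq_of_adj hx hdeg hq hqx
    exact ⟨q, hq, by rwa [hqx, hqs], hqs⟩
  · exact ⟨p, hp, hps, hpx⟩

/-- `IsSweep adj C fav l s t`: the joint strategy `t` arises from `s` when the nodes of the list `l`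
move one after the other, each unstable one taking the colour of its favourite predecessor
`fav x` if it can and the colour of some other predecessor otherwise. Only properties of the
final strategy `t` are recorded; they refer to the final colours of the predecessors. -/
structure IsSweep (adj : V → V → Prop) (C : V → Finset M) (fav : V → V) (l : List V)
    (s t : V → M) : Prop where
  eq_of_notMem : ∀ x, x ∉ l → t x = s x
  not_unstable : ∀ x ∈ l, ¬ Unstable adj C t x
  ne_of_adj : ∀ x p, t x ≠ s x → adj p x → t p ≠ s x
  exists_supporter : ∀ x, t x ≠ s x → ∃ p, adj p x ∧ t p = t x
  eq_fav : ∀ x, t x ≠ s x → adj (fav x) x → t (fav x) ∈ C x → t x = t (fav x)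

variable {fav : V → V} {l : List V} {t u : V → M}

theorem IsSweep.nil : IsSweep adj C fav [] s s where
  eq_of_notMem _ _ := rfl
  not_unstable _ h := absurd h List.not_mem_nil
  ne_of_adj _ _ h := absurd rfl h
  exists_supporter _ h := absurd rfl h
  eq_fav _ h := absurd rfl h

theorem IsSweep.cons (hx : IsSweep adj C fav [x] s u) (hl : IsSweep adj C fav l u t)
    (hxl : ∀ y ∈ l, x ≠ y ∧ ¬ adj y x) : IsSweep adj C fav (x :: l) s t := by
  have tx : t x = u x := hl.eq_of_notMem x fun h => (hxl x h).1 rfl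
  have tp : ∀ p, adj p x → t p = u p := fun p hp => hl.eq_of_notMem p fun h => (hxl p h).2 hp
  have us : ∀ y, y ≠ x → u y = s y := fun y hy => hx.eq_of_notMem y (by simpa using hy)
  refine ⟨fun y hy => ?_, fun y hy hu => ?_, fun y p hy hp => ?_, fun y hy => ?_,
    fun y hy hf hC => ?_⟩
  · rw [List.mem_cons, not_or] at hy
    rw [hl.eq_of_notMem y hy.2, us y hy.1]
  · obtain rfl | hy := List.mem_cons.1 hy
    · exact hx.not_unstable y (List.mem_singleton_self y)
        (hu.congr tx.symm fun p hp => (tp p hp).symm)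
    · exact hl.not_unstable y hy hu
  all_goals obtain rfl | hyx := eq_or_ne y x
  · rw [tx] at hy
    rw [tp p hp]
    exact hx.ne_of_adj y p hy hp
  · rw [← us y hyx] at hy ⊢
    exact hl.ne_of_adj y p hy hp
  · rw [tx] at hy
    obtain ⟨p, hp, hpy⟩ := hx.exists_supporter y hy
    exact ⟨p, hp, by rw [tp p hp, tx, hpy]⟩
  · rw [← us y hyx] at hy
    exact hl.exists_supporter y hy
  · rw [tx] at hy
    rw [tp _ hf] at hC
    rw [tx, tp _ hf, hx.eq_fav y hy hf hC]
  · rw [← us y hyx] at hy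
    exact hl.eq_fav y hy hf hC

theorem IsSweep.unstable (h : IsSweep adj C fav l s t) (hu : Unstable adj C t x) :
    x ∉ l ∧ (Unstable adj C s x ∨ ∃ p ∈ l, adj p x ∧ t p ≠ s p) := by
  have hxl : x ∉ l := fun hx => h.not_unstable x hx hu
  refine ⟨hxl, or_iff_not_imp_right.2 fun hcon => ?_⟩
  refine hu.congr (h.eq_of_notMem x hxl).symm fun p hp => ?_
  by_contra hne
  have hpl : p ∈ l := by
    by_contra hpl
    exact hne (h.eq_of_notMem p hpl).symm
  exact hcon ⟨p, hpl, hp, Ne.symm hne⟩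

theorem IsSweep.exists_changed_of_adj (h : IsSweep adj C fav l s t) (ht : Valid C t)
    (hx : t x ≠ s x) (hst : ¬ Unstable adj C s x) : ∃ p, adj p x ∧ t p ≠ s p := by
  by_contra! hcon
  obtain ⟨p, hp, hpx⟩ := h.exists_supporter x hx
  refine hst ⟨fun q hq => hcon q hq ▸ h.ne_of_adj x q hx hq, p, hp, ?_⟩
  rw [← hcon p hp, hpx]
  exact ht x

theorem exists_best_available_colour (fav : V → V) (hu : Unstable adj C s x) :
    ∃ p, adj p x ∧ s p ∈ C x ∧ (adj (fav x) x → s (fav x) ∈ C x → s p = s (fav x)) := by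
  obtain ⟨-, p, hp, hpC⟩ := hu
  by_cases hf : adj (fav x) x ∧ s (fav x) ∈ C x
  · exact ⟨fav x, hf.1, hf.2, fun _ _ => rfl⟩
  · exact ⟨p, hp, hpC, fun h h' => absurd ⟨h, h'⟩ hf⟩

theorem deviates_update [Fintype V] (hirr : ∀ y, ¬ adj y y) (hs : Valid C s)
    (hne : ∀ p, adj p x → s p ≠ s x) {q : V} (hq : adj q x) (hqC : s q ∈ C x) :
    Deviates adj C s (Function.update s x (s q)) := by
  have hqx : q ≠ x := fun e => hirr x (e ▸ hq)
  refine ⟨fun y => ?_, fun e => hne q hq ?_, fun y hy => ?_⟩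
  · obtain rfl | hy := eq_or_ne y x
    · simpa using hqC
    · simpa [hy] using hs y
  · simpa using (congrFun e x).symm
  · obtain rfl : y = x := by
      by_contra hyx
      exact hy (by simp [hyx])
    rw [payoff_unweighted, payoff_unweighted, Nat.cast_lt]
    have hzero : supporters adj s y = ∅ :=
      Finset.eq_empty_of_forall_notMem fun p hp =>
        hne p (mem_supporters.1 hp).1 (mem_supporters.1 hp).2
    rw [hzero, Finset.card_empty, Finset.card_pos]
    exact ⟨q, mem_supporters.2 ⟨hq, by simp [hqx]⟩⟩

theorem exists_isSweep_singleton [Fintype V] (hirr : ∀ y, ¬ adj y y) (fav : V → V)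
    (hs : Valid C s) (x : V) :
    ∃ t, ReachesWithin (Deviates adj C) 1 s t ∧ IsSweep adj C fav [x] s t := by
  by_cases hu : Unstable adj C s x
  · obtain ⟨q, hq, hqC, hfav⟩ := exists_best_available_colour fav hu
    refine ⟨Function.update s x (s q), .single (deviates_update hirr hs hu.1 hq hqC), ?_⟩
    have of_adj : ∀ p, adj p x → Function.update s x (s q) p = s p := fun p hp =>
      Function.update_of_ne (fun e : p = x => hirr x (e ▸ hp)) ..
    have eq_of_changed : ∀ y, Function.update s x (s q) y ≠ s y → y = x := fun y hy => by
      by_contra hyx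
      exact hy (Function.update_of_ne hyx ..)
    refine ⟨fun y hy => Function.update_of_ne (by simpa using hy) .., fun y hy hcon => ?_,
      fun y p hy hp => ?_, fun y hy => ?_, fun y hy hf hC => ?_⟩
    · obtain rfl := List.mem_singleton.1 hy
      exact hcon.1 q hq (by rw [of_adj q hq, Function.update_self])
    all_goals obtain rfl := eq_of_changed y hy
    · rw [of_adj p hp]
      exact hu.1 p hp
    · exact ⟨q, hq, by rw [of_adj q hq, Function.update_self]⟩
    · rw [of_adj _ hf] at hC ⊢
      rw [Function.update_self, hfav hf hC]
  · exact ⟨s, .refl 1 s, fun _ _ => rfl, fun y hy => List.mem_singleton.1 hy ▸ hu,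
      fun _ _ h => absurd rfl h, fun _ h => absurd rfl h, fun _ h => absurd rfl h⟩

theorem ReachesWithin.valid [Fintype V] {N : ℕ} (h : ReachesWithin (Deviates adj C) N s t)
    (hs : Valid C s) : Valid C t :=
  h.preserves (fun _ _ hd _ => hd.1) hs

theorem exists_isSweep [Fintype V] (hirr : ∀ y, ¬ adj y y) (fav : V → V) (hs : Valid C s)
    {l : List V} (hl : l.Pairwise fun x y => x ≠ y ∧ ¬ adj y x) :
    ∃ t, ReachesWithin (Deviates adj C) l.length s t ∧ IsSweep adj C fav l s t := by
  induction l generalizing s with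
  | nil => exact ⟨s, .refl _ s, .nil⟩
  | cons x l ih =>
    obtain ⟨hxl, hl⟩ := List.pairwise_cons.1 hl
    obtain ⟨u, hsu, hu⟩ := exists_isSweep_singleton hirr fav hs x
    obtain ⟨t, hut, ht⟩ := ih (hsu.valid hs) hl
    exact ⟨t, (hsu.trans hut).mono (by simp [add_comm]), hu.cons ht hxl⟩

theorem cImpPath_zero [Fintype V] {w : V → V → ℝ} {β : V → M → ℕ} (hs : IsStrong adj w β C s) :
    CImpPath adj w β C s 0 :=
  ⟨fun _ => s, rfl, fun _ ht => absurd ht (Nat.not_lt_zero _), hs⟩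

theorem CImpPath.head [Fintype V] {w : V → V → ℝ} {β : V → M → ℕ} {L : ℕ}
    (hd : ProfDev adj w β C s s') (h : CImpPath adj w β C s' L) :
    CImpPath adj w β C s (L + 1) := by
  obtain ⟨σ, hσ0, hσ, hσL⟩ := h
  refine ⟨fun t => t.casesOn s σ, rfl, fun t ht => ?_, hσL⟩
  cases t with
  | zero => simpa [hσ0] using hd
  | succ t => exact hσ t (by omega)

theorem ReachesWithin.exists_cImpPath [Fintype V] {w : V → V → ℝ} {β : V → M → ℕ} {N : ℕ}
    (h : ReachesWithin (ProfDev adj w β C) N s t) (ht : IsStrong adj w β C t) :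
    ∃ L ≤ N, CImpPath adj w β C s L := by
  induction h with
  | refl N => exact ⟨0, N.zero_le, cImpPath_zero ht⟩
  | head hd _ ih =>
    obtain ⟨L, hL, hpath⟩ := ih ht
    exact ⟨L + 1, Nat.succ_le_succ hL, hpath.head hd⟩

end Unweighted

section Chain

variable {V : Type} {m n : ℕ} {node : ℕ → ℕ → V} {k : ℕ → ℕ} {i j l : ℕ} {p x : V}

namespace IsOpenChain

theorem pos_left (h : IsOpenChain m n node k) : 0 < m :=
  pos_of_gt h.1

theorem three_le (h : IsOpenChain m n node k) : 3 ≤ n :=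
  h.2.1

theorem link_lt (h : IsOpenChain m n node k) (hj : j + 1 < m) : k j < n :=
  (h.2.2.1 j hj).2

theorem node_zero_eq (h : IsOpenChain m n node k) (hj : j + 1 < m) :
    node j 0 = node (j + 1) (k j) :=
  h.2.2.2.1 j hj

theorem exists_link_eq_succ (h : IsOpenChain m n node k) (hj : j + 1 < m) :
    ∃ l, k j = l + 1 ∧ l + 1 < n := by
  obtain ⟨h1, hn⟩ := h.2.2.1 j hj
  exact ⟨k j - 1, by omega, by omega⟩

theorem eq_or_link (h : IsOpenChain m n node k) {l' : ℕ} (hi : i < m) (hl : l < n) (hj : j < m)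
    (hl' : l' < n) (e : node i l = node j l') :
    (i = j ∧ l = l') ∨ (j = i + 1 ∧ l = 0 ∧ l' = k i ∧ 0 < l') ∨
      (i = j + 1 ∧ l' = 0 ∧ l = k j ∧ 0 < l) := by
  rcases h.2.2.2.2.1 i l j l' hi hl hj hl' e with heq | ⟨rfl, hl0, rfl⟩ | ⟨rfl, hl0, rfl⟩
  · exact .inl heq
  · exact .inr (.inl ⟨rfl, hl0, rfl, (h.2.2.1 i hj).1⟩)
  · exact .inr (.inr ⟨rfl, hl0, rfl, (h.2.2.1 j hi).1⟩)

theorem exists_node_eq (h : IsOpenChain m n node k) (x : V) :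
    (∃ i l, i < m ∧ l + 1 < n ∧ x = node i (l + 1)) ∨ x = node (m - 1) 0 := by
  obtain ⟨i, l, hi, hl, rfl⟩ := h.2.2.2.2.2 x
  rcases l with _ | l
  · obtain hi' | hi' := (Nat.succ_le_of_lt hi).lt_or_eq
    · obtain ⟨l, hk, hl⟩ := h.exists_link_eq_succ hi'
      exact .inl ⟨i + 1, l, hi', hl, hk ▸ h.node_zero_eq hi'⟩
    · exact .inr (by rw [← hi', Nat.succ_sub_one])
  · exact .inl ⟨i, l, hi, hl, rfl⟩

theorem chainAdj_iff (h : IsOpenChain m n node k) :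
    chainAdj m n node p x ↔ ∃ j < m, (∃ l, l + 1 < n ∧ p = node j l ∧ x = node j (l + 1)) ∨
      (p = node j (n - 1) ∧ x = node j 0) := by
  have hn := h.three_le
  constructor
  · rintro ⟨j, l, hj, hl, rfl, rfl⟩
    obtain hl' | rfl := (Nat.succ_le_of_lt hl).lt_or_eq
    · exact ⟨j, hj, .inl ⟨l, hl', rfl, by rw [Nat.mod_eq_of_lt hl']⟩⟩
    · exact ⟨j, hj, .inr ⟨rfl, by rw [Nat.mod_self]⟩⟩
  · rintro ⟨j, hj, ⟨l, hl, rfl, rfl⟩ | ⟨rfl, rfl⟩⟩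
    · exact ⟨j, l, hj, by omega, rfl, by rw [Nat.mod_eq_of_lt hl]⟩
    · exact ⟨j, n - 1, hj, by omega, rfl, by rw [Nat.sub_add_cancel (by omega), Nat.mod_self]⟩

theorem adj_node_succ (h : IsOpenChain m n node k) (hi : i < m) (hl : l + 1 < n) :
    chainAdj m n node (node i l) (node i (l + 1)) :=
  h.chainAdj_iff.2 ⟨i, hi, .inl ⟨l, hl, rfl, rfl⟩⟩

theorem adj_node_zero (h : IsOpenChain m n node k) (hi : i < m) :
    chainAdj m n node (node i (n - 1)) (node i 0) :=
  h.chainAdj_iff.2 ⟨i, hi, .inr ⟨rfl, rfl⟩⟩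

theorem adj_node_succ_iff (h : IsOpenChain m n node k) (hi : i < m) (hl : l + 1 < n) :
    chainAdj m n node p (node i (l + 1)) ↔
      p = node i l ∨ ∃ j, i = j + 1 ∧ l + 1 = k j ∧ p = node j (n - 1) := by
  constructor
  · intro hp
    obtain ⟨j, hj, ⟨l', hl', rfl, e⟩ | ⟨rfl, e⟩⟩ := h.chainAdj_iff.1 hp
    · rcases h.eq_or_link hi hl hj hl' e with ⟨rfl, hll⟩ | ⟨-, e, -⟩ | ⟨-, e, -⟩
      · exact .inl (by rw [Nat.succ.inj hll])
      all_goals omega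
    · rcases h.eq_or_link hi hl hj (by omega) e with ⟨-, e⟩ | ⟨-, -, -, e⟩ | ⟨rfl, -, hk, -⟩
      · omega
      · omega
      · exact .inr ⟨j, rfl, hk, rfl⟩
  · rintro (rfl | ⟨j, rfl, hk, rfl⟩)
    · exact h.adj_node_succ hi hl
    · rw [hk, ← h.node_zero_eq hi]
      exact h.adj_node_zero (by omega)

theorem adj_node_end_iff (h : IsOpenChain m n node k) :
    chainAdj m n node p (node (m - 1) 0) ↔ p = node (m - 1) (n - 1) := by
  have hm := h.pos_left
  have hn := h.three_le
  refine ⟨fun hp => ?_, fun e => e ▸ h.adj_node_zero (by omega)⟩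
  obtain ⟨j, hj, ⟨l, hl, rfl, e⟩ | ⟨rfl, e⟩⟩ := h.chainAdj_iff.1 hp
  · rcases h.eq_or_link (by omega) (by omega) hj hl e with e | e | e <;> omega
  · rcases h.eq_or_link (by omega) (by omega) hj (by omega) e with ⟨rfl, -⟩ | e | e
    · rfl
    all_goals omega

theorem eq_of_node_adj (h : IsOpenChain m n node k) (hi : i < m) (h0 : 0 < l) (hl : l < n)
    (hx : chainAdj m n node (node i l) x) :
    (l + 1 < n ∧ x = node i (l + 1)) ∨ (l = n - 1 ∧ x = node i 0) ∨
      ∃ j, i = j + 1 ∧ x = node j 1 := by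
  obtain ⟨j, hj, ⟨l', hl', e, rfl⟩ | ⟨e, rfl⟩⟩ := h.chainAdj_iff.1 hx
  · rcases h.eq_or_link hi hl hj (by omega) e with ⟨rfl, rfl⟩ | e | ⟨rfl, rfl, -⟩
    · exact .inl ⟨hl', rfl⟩
    · omega
    · exact .inr (.inr ⟨j, rfl, rfl⟩)
  · rcases h.eq_or_link hi hl hj (by omega) e with ⟨rfl, rfl⟩ | e | e
    · exact .inr (.inl ⟨rfl, rfl⟩)
    all_goals omega

theorem irrefl (h : IsOpenChain m n node k) (x : V) : ¬ chainAdj m n node x x := by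
  intro hx
  have hm := h.pos_left
  have hn := h.three_le
  obtain ⟨i, l, hi, hl, rfl⟩ | rfl := h.exists_node_eq x
  · obtain e | ⟨j, rfl, -, e⟩ := (h.adj_node_succ_iff hi hl).1 hx
    · rcases h.eq_or_link hi hl hi (by omega) e with e | e | e <;> omega
    · rcases h.eq_or_link hi hl (by omega) (by omega) e with e | e | e <;> omega
  · rcases h.eq_or_link (by omega) (by omega) (by omega) (by omega) (h.adj_node_end_iff.1 hx) with
      e | e | e <;> omega

theorem card_pred_le [Fintype V] (h : IsOpenChain m n node k) (x : V) :
    ({p | chainAdj m n node p x} : Finset V).card ≤ 2 := by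
  obtain ⟨a, b, hab⟩ : ∃ a b, ∀ p, chainAdj m n node p x → p = a ∨ p = b := by
    obtain ⟨i, l, hi, hl, rfl⟩ | rfl := h.exists_node_eq x
    · refine ⟨node i l, node (i - 1) (n - 1), fun p hp => ?_⟩
      obtain rfl | ⟨j, rfl, -, rfl⟩ := (h.adj_node_succ_iff hi hl).1 hp
      · exact .inl rfl
      · exact .inr rfl
    · exact ⟨_, node (m - 1) 0, fun p hp => .inl (h.adj_node_end_iff.1 hp)⟩
  refine (Finset.card_le_card fun p hp => ?_).trans (Finset.card_le_two (a := a) (b := b))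
  simpa using hab p (Finset.mem_filter.1 hp).2

theorem exists_unique_pred (h : IsOpenChain m n node k) (hi : i < m) :
    ∃ l, l + 1 < n ∧ ∀ p, chainAdj m n node p (node i (l + 1)) → p = node i l := by
  have hn := h.three_le
  obtain ⟨l, hl, hlk⟩ : ∃ l, l + 1 < n ∧ l + 1 ≠ k (i - 1) := by
    by_cases hk : k (i - 1) = 1
    · exact ⟨1, by omega, by omega⟩
    · exact ⟨0, by omega, by omega⟩
  refine ⟨l, hl, fun p hp => ((h.adj_node_succ_iff hi hl).1 hp).resolve_right ?_⟩
  rintro ⟨j, rfl, hk, -⟩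
  exact hlk hk

theorem pred_or_closing (h : IsOpenChain m n node k) {r : V → V → Prop}
    (hadj : ∀ p x, r p x → chainAdj m n node p x) (hi : i < m) (hl : l + 1 < n)
    (hp : ∃ p, r p (node i (l + 1))) :
    r (node i l) (node i (l + 1)) ∨ ∃ j < i, r (node j (n - 1)) (node j 0) := by
  obtain ⟨p, hp⟩ := hp
  obtain rfl | ⟨j, rfl, hk, rfl⟩ := (h.adj_node_succ_iff hi hl).1 (hadj _ _ hp)
  · exact .inl hp
  · rw [hk, ← h.node_zero_eq hi] at hp
    exact .inr ⟨j, j.lt_succ_self, hp⟩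

/-- If no edge of `r` closes a cycle, then walking backwards along `r` one descends to the first
node of the current cycle, which lies on the next cycle, and so on to the last cycle; but the only
edge into its first node closes a cycle. -/
theorem exists_closing (h : IsOpenChain m n node k) {r : V → V → Prop}
    (hadj : ∀ p x, r p x → chainAdj m n node p x) (hpred : ∀ p x, r p x → ∃ q, r q p)
    (hr : r p x) : ∃ i < m, r (node i (n - 1)) (node i 0) := by
  have hm := h.pos_left
  by_contra! hcon
  have hdescend : ∀ i l, i < m → l < n → (∃ q, r q (node i l)) → ∃ q, r q (node i 0) := by
    intro i l hi hl hq
    refine Nat.decreasingInduction' (P := fun l => ∃ q, r q (node i l)) (fun l' hl' _ hq' => ?_)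
      l.zero_le hq
    obtain hq' | ⟨j, hj, hcl⟩ := h.pred_or_closing hadj hi (by omega) hq'
    · exact hpred _ _ hq'
    · exact absurd hcl (hcon j (hj.trans hi))
  obtain ⟨i, hi, hq⟩ : ∃ i < m, ∃ q, r q (node i 0) := by
    obtain ⟨i, l, hi, hl, rfl⟩ | rfl := h.exists_node_eq x
    · exact ⟨i, hi, hdescend i _ hi hl ⟨p, hr⟩⟩
    · exact ⟨m - 1, by omega, p, hr⟩
  obtain ⟨q, hq⟩ : ∃ q, r q (node (m - 1) 0) := by
    refine Nat.le_induction (P := fun j _ => j < m → ∃ q, r q (node j 0)) (fun _ => hq)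
      (fun j _ ih hj => ?_) (m - 1) (by omega) (by omega)
    refine hdescend (j + 1) (k j) hj (h.link_lt hj) ?_
    rw [← h.node_zero_eq hj]
    exact ih (by omega)
  exact hcon (m - 1) (by omega) (h.adj_node_end_iff.1 (hadj _ _ hq) ▸ hq)

/-- Follow backwards the first cycle closed by `r`: leaving it would mean to enter an earlier cycle
through its closing edge. -/
theorem exists_cycle (h : IsOpenChain m n node k) {r : V → V → Prop}
    (hadj : ∀ p x, r p x → chainAdj m n node p x) (hpred : ∀ p x, r p x → ∃ q, r q p)
    (hr : r p x) : ∃ i < m, ∀ l, l + 1 < n → r (node i l) (node i (l + 1)) := by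
  have hclosed := h.exists_closing hadj hpred hr
  obtain ⟨hi, hcl⟩ := Nat.find_spec hclosed
  refine ⟨Nat.find hclosed, hi, fun l hl => ?_⟩
  have hmin : ∀ l, l + 1 < n → (∃ q, r q (node (Nat.find hclosed) (l + 1))) →
      r (node (Nat.find hclosed) l) (node (Nat.find hclosed) (l + 1)) := fun l hl hq =>
    (h.pred_or_closing hadj hi hl hq).resolve_right fun ⟨j, hj, hcl⟩ =>
      Nat.find_min hclosed hj ⟨hj.trans hi, hcl⟩
  refine hmin l hl ?_
  exact Nat.decreasingInduction' (P := fun l => ∃ q, r q (node (Nat.find hclosed) l))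
    (n := n - 1) (fun l' hl' _ hq => hpred _ _ (hmin l' (by omega) hq)) (by omega) (hpred _ _ hcl)

end IsOpenChain

variable {M : Type} {C : V → Finset M} {s s' t : V → M}

/-- All nodes of the `i`-th cycle play the same colour. -/
def IsMono (n : ℕ) (node : ℕ → ℕ → V) (s : V → M) (i : ℕ) : Prop :=
  ∀ l < n, s (node i l) = s (node i 0)

theorem isMono_of_forall_succ (hs : ∀ l, l + 1 < n → s (node i l) = s (node i (l + 1))) :
    IsMono n node s i := by
  intro l hl
  induction l with
  | zero => rfl
  | succ l ih => rw [← hs l hl, ih (by omega)]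

/-- The cycles that are not monochromatic; the improvement path is built by removing them one after
the other. -/
noncomputable def discordantCycles (m n : ℕ) (node : ℕ → ℕ → V) (s : V → M) : Finset ℕ :=
  {i ∈ Finset.range m | ¬ IsMono n node s i}

theorem mem_discordantCycles : i ∈ discordantCycles m n node s ↔ i < m ∧ ¬ IsMono n node s i := by
  simp only [discordantCycles, Finset.mem_filter, Finset.mem_range]

namespace IsOpenChain

theorem eq_of_deviates_of_isMono [Fintype V] (h : IsOpenChain m n node k)
    (hd : Deviates (chainAdj m n node) C s s') (hi : i < m) (hs : IsMono n node s i) (hl : l < n) :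
    s' (node i l) = s (node i l) := by
  have hn := h.three_le
  by_contra hne
  have hback : ∀ p x, chainAdj m n node p x → s p = s x → s' x ≠ s x → s' p ≠ s p := by
    intro p x hp hpx hx
    rwa [hd.eq_of_adj hx.symm (h.card_pred_le x) hp hpx, hpx]
  have hdown : ∀ a b, a ≤ b → b < n → s' (node i b) ≠ s (node i b) →
      s' (node i a) ≠ s (node i a) := fun a b hab hb hx => by
    refine Nat.decreasingInduction' (P := fun l => s' (node i l) ≠ s (node i l))
      (fun l hl _ hx => ?_) hab hx
    exact hback _ _ (h.adj_node_succ hi (by omega))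
      ((hs l (by omega)).trans (hs _ (by omega)).symm) hx
  have hlast : s' (node i (n - 1)) ≠ s (node i (n - 1)) :=
    hback _ _ (h.adj_node_zero hi) (hs _ (by omega)) (hdown 0 l l.zero_le hl hne)
  obtain ⟨a, ha, hpred⟩ := h.exists_unique_pred hi
  have hone : (supporters (chainAdj m n node) s' (node i (a + 1))).card ≤ 1 :=
    (Finset.card_le_card fun p hp => Finset.mem_singleton.2
      (hpred p (mem_supporters.1 hp).1)).trans_eq (Finset.card_singleton (node i a))
  have hchanged := hdown (a + 1) (n - 1) (by omega) (by omega) hlast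
  exact hone.not_gt (hd.one_lt_card_supporters hchanged.symm (h.adj_node_succ hi ha)
    ((hs a (by omega)).trans (hs _ ha).symm))

theorem eq_of_reachesWithin_of_isMono [Fintype V] (h : IsOpenChain m n node k) {N : ℕ}
    (hst : ReachesWithin (Deviates (chainAdj m n node) C) N s t) (hi : i < m)
    (hs : IsMono n node s i) : ∀ l < n, t (node i l) = s (node i l) := by
  have hn := h.three_le
  refine hst.preserves (P := fun u => ∀ l < n, u (node i l) = s (node i l))
    (fun u u' hd hu l hl => ?_) fun _ _ => rfl
  have hmono : IsMono n node u i := fun l hl => by rw [hu l hl, hu 0 (by omega), hs l hl]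
  rw [h.eq_of_deviates_of_isMono hd hi hmono hl, hu l hl]

theorem discordantCycles_subset [Fintype V] (h : IsOpenChain m n node k) {N : ℕ}
    (hst : ReachesWithin (Deviates (chainAdj m n node) C) N s t) :
    discordantCycles m n node t ⊆ discordantCycles m n node s := by
  intro i hi
  rw [mem_discordantCycles] at hi ⊢
  refine ⟨hi.1, fun hs => hi.2 fun l hl => ?_⟩
  have heq := h.eq_of_reachesWithin_of_isMono hst hi.1 hs
  rw [heq l hl, heq 0 (by omega), hs l hl]

theorem discordantCycles_ssubset [Fintype V] (h : IsOpenChain m n node k) {N : ℕ}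
    (hst : ReachesWithin (Deviates (chainAdj m n node) C) N s t) (hi : i < m)
    (ht : IsMono n node t i) (hl : l < n) (hne : t (node i l) ≠ s (node i l)) :
    discordantCycles m n node t ⊂ discordantCycles m n node s :=
  (h.discordantCycles_subset hst).ssubset_of_mem_notMem
    (mem_discordantCycles.2 ⟨hi, fun hs => hne (h.eq_of_reachesWithin_of_isMono hst hi hs l hl)⟩)
    fun hmem => (mem_discordantCycles.1 hmem).2 ht

theorem discordantCycles_ssubset_of_deviates [Fintype V] (h : IsOpenChain m n node k)
    (hst : ∀ x, ¬ Unstable (chainAdj m n node) C s x)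
    (hd : Deviates (chainAdj m n node) C s s') :
    discordantCycles m n node s' ⊂ discordantCycles m n node s := by
  have hn := h.three_le
  have hpred : ∀ x, s x ≠ s' x → ∃ p, chainAdj m n node p x ∧ s p ≠ s' p ∧ s' p = s' x :=
    fun x hx => hd.exists_deviating_supporter hx (hst x) (h.card_pred_le x)
  obtain ⟨x, hx⟩ : ∃ x, s x ≠ s' x := Function.ne_iff.1 hd.2.1
  obtain ⟨p, hpx⟩ := hpred x hx
  obtain ⟨i, hi, hcyc⟩ := h.exists_cycle
    (r := fun p x => chainAdj m n node p x ∧ s p ≠ s' p ∧ s' p = s' x)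
    (fun _ _ hr => hr.1) (fun p _ hr => hpred p hr.2.1) hpx
  have hmono : IsMono n node s' i := isMono_of_forall_succ fun l hl => (hcyc l hl).2.2
  exact h.discordantCycles_ssubset (.single hd) hi hmono (by omega) (hcyc 0 (by omega)).2.1.symm

theorem isStrong_of_discordantCycles_eq_empty [Fintype V] (h : IsOpenChain m n node k)
    (hs : Valid C s) (hempty : discordantCycles m n node s = ∅) :
    IsStrong (chainAdj m n node) (fun _ _ => 1) (fun _ _ => 0) C s := by
  refine ⟨hs, fun s' hd => hd.2.1 (funext fun x => ?_)⟩
  obtain ⟨i, l, hi, hl, rfl⟩ := h.2.2.2.2.2 x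
  refine (h.eq_of_deviates_of_isMono hd hi ?_ hl).symm
  by_contra hmono
  exact Finset.notMem_empty i (hempty ▸ mem_discordantCycles.2 ⟨hi, hmono⟩)

end IsOpenChain

/-- The nodes of the `i`-th cycle at the positions `d + 1, …, n - 1`, in order. The shared node
`node j 0` thus belongs to the arcs of cycle `j + 1`; accordingly the last node `node (m - 1) 0`
makes up the arc of a fictitious cycle `m`. -/
def arc (m n : ℕ) (node : ℕ → ℕ → V) (i d : ℕ) : List V :=
  if i < m then (List.Ico (d + 1) n).map (node i) else [node (m - 1) 0]

theorem mem_arc {d : ℕ} (hi : i ≤ m) : x ∈ arc m n node i d ↔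
    (i < m ∧ ∃ l, d < l ∧ l < n ∧ x = node i l) ∨ (i = m ∧ x = node (m - 1) 0) := by
  obtain hi | rfl := hi.lt_or_eq
  · simp [arc, hi, hi.ne, and_assoc, eq_comm]
  · simp [arc]

theorem node_mem_arc {d : ℕ} (hi : i < m) (hd : d < l) (hl : l < n) :
    node i l ∈ arc m n node i d :=
  (mem_arc hi.le).2 (.inl ⟨hi, l, hd, hl, rfl⟩)

/-- The predecessor of the first node of a cycle on that same cycle; arbitrary on the other
nodes. -/
noncomputable def ownPred (m n : ℕ) (node : ℕ → ℕ → V) : V → V :=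
  Function.extend (fun j : Fin m => node j 0) (fun j => node j (n - 1)) id

namespace IsOpenChain

variable {d : ℕ}

theorem ownPred_node_zero (h : IsOpenChain m n node k) (hj : j < m) :
    ownPred m n node (node j 0) = node j (n - 1) := by
  have hn := h.three_le
  have hinj : Function.Injective fun j : Fin m => node j 0 := fun a b e => by
    rcases h.eq_or_link a.2 (by omega) b.2 (by omega) e with ⟨e, -⟩ | e | e
    · exact Fin.ext e
    all_goals omega
  exact hinj.extend_apply _ _ ⟨j, hj⟩

theorem node_zero_mem_arc (h : IsOpenChain m n node k) (hj : j < m) (hd : j + 1 < m → d < k j) :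
    node j 0 ∈ arc m n node (j + 1) d := by
  obtain hj' | rfl := (Nat.succ_le_of_lt hj).lt_or_eq
  · rw [h.node_zero_eq hj']
    exact node_mem_arc hj' (hd hj') (h.link_lt hj')
  · exact (mem_arc le_rfl).2 (.inr ⟨rfl, rfl⟩)

theorem eq_of_node_last_mem_arc (h : IsOpenChain m n node k) (hj : j < m) (hi : i ≤ m)
    (hmem : node j (n - 1) ∈ arc m n node i d) : i = j := by
  have hn := h.three_le
  obtain ⟨hi, l, hd, hl, e⟩ | ⟨rfl, e⟩ := (mem_arc hi).1 hmem
  · rcases h.eq_or_link hj (by omega) hi hl e with e | e | e <;> omega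
  · rcases h.eq_or_link hj (by omega) (by omega) (by omega) e with e | e | e <;> omega

theorem notMem_arc_of_adj_node_zero (h : IsOpenChain m n node k) (hj : j < m)
    (hp : chainAdj m n node p (node j 0)) : p ∉ arc m n node (j + 1) (k j - 1) := by
  intro hmem
  have hlast : p ≠ node j (n - 1) := by
    rintro rfl
    exact Nat.succ_ne_self j (h.eq_of_node_last_mem_arc hj hj hmem)
  obtain hj' | rfl := (Nat.succ_le_of_lt hj).lt_or_eq
  · obtain ⟨l, hk, hl⟩ := h.exists_link_eq_succ hj'
    rw [h.node_zero_eq hj', hk] at hp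
    obtain rfl | ⟨j', e, -, rfl⟩ := (h.adj_node_succ_iff hj' hl).1 hp
    · obtain ⟨-, l', hl', hn, e⟩ | ⟨e, -⟩ := (mem_arc hj).1 hmem
      · rcases h.eq_or_link hj' (by omega) hj' hn e with e | e | e <;> omega
      · omega
    · exact hlast (by rw [Nat.succ.inj e])
  · exact hlast (h.adj_node_end_iff.1 hp)

theorem eq_of_adj_of_mem_arc (h : IsOpenChain m n node k) (hi : i ≤ m)
    (hp : p ∈ arc m n node i d) (hx : x ∉ arc m n node i d) (hpx : chainAdj m n node p x) :
    (i < m ∧ p = node i (n - 1) ∧ x = node i 0) ∨ ∃ j, i = j + 1 ∧ x = node j 1 := by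
  have hm := h.pos_left
  have hn := h.three_le
  obtain ⟨hi, l, hd, hl, rfl⟩ | ⟨rfl, rfl⟩ := (mem_arc hi).1 hp
  · obtain ⟨hl, rfl⟩ | ⟨rfl, rfl⟩ | hlink := h.eq_of_node_adj hi (by omega) hl hpx
    · exact absurd (node_mem_arc hi (by omega) hl) hx
    · exact .inl ⟨hi, rfl, rfl⟩
    · exact .inr hlink
  · refine .inr ⟨i - 1, by omega, ?_⟩
    obtain ⟨j, hj, ⟨l, hl, e, rfl⟩ | ⟨e, rfl⟩⟩ := h.chainAdj_iff.1 hpx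
    · rcases h.eq_or_link (by omega) (by omega) hj (by omega) e with ⟨rfl, rfl⟩ | e | e
      · rfl
      all_goals omega
    · rcases h.eq_or_link (by omega) (by omega) hj (by omega) e with e | e | e <;> omega

theorem pairwise_arc (h : IsOpenChain m n node k) (i d : ℕ) :
    (arc m n node i d).Pairwise fun x y => x ≠ y ∧ ¬ chainAdj m n node y x := by
  rw [arc]
  split_ifs with hi
  · rw [List.pairwise_map]
    refine (List.Ico.pairwise_lt (d + 1) n).imp_of_mem fun {a b} ha hb hab => ?_
    rw [List.Ico.mem] at ha hb
    obtain ⟨a, rfl⟩ := Nat.exists_eq_add_of_lt ha.1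
    refine ⟨fun e => ?_, fun hadj => ?_⟩
    · rcases h.eq_or_link hi ha.2 hi hb.2 e with e | e | e <;> omega
    · obtain e | ⟨j, rfl, -, e⟩ := (h.adj_node_succ_iff hi ha.2).1 hadj
      · rcases h.eq_or_link hi hb.2 hi (by omega) e with e | e | e <;> omega
      · rcases h.eq_or_link hi hb.2 (by omega) (by omega) e with e | e | e <;> omega
  · exact List.pairwise_singleton _ _

theorem length_arc_le (h : IsOpenChain m n node k) (i d : ℕ) :
    (arc m n node i d).length ≤ n := by
  have hn := h.three_le
  rw [arc]
  split_ifs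
  · rw [List.length_map, List.Ico.length]
    exact Nat.sub_le ..
  · rw [List.length_singleton]
    omega

end IsOpenChain

variable {M : Type} {C : V → Finset M} {s t : V → M} {d : ℕ}

/-- The first node of the `j`-th cycle could take the colour of its predecessor on that cycle, but
does not have it. -/
def Disloyal (n : ℕ) (node : ℕ → ℕ → V) (C : V → Finset M) (s : V → M) (j : ℕ) : Prop :=
  s (node j (n - 1)) ∈ C (node j 0) ∧ s (node j 0) ≠ s (node j (n - 1))

/-- A sweep of an arc that prefers, where two cycles meet, the predecessor on the earlier one. -/
abbrev IsArcSweep (m n : ℕ) (node : ℕ → ℕ → V) (C : V → Finset M) (i d : ℕ) (s t : V → M) : Prop :=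
  IsSweep (chainAdj m n node) C (ownPred m n node) (arc m n node i d) s t

theorem IsOpenChain.exists_isArcSweep [Fintype V] (h : IsOpenChain m n node k) (hs : Valid C s)
    (i d : ℕ) : ∃ t, ReachesWithin (Deviates (chainAdj m n node) C) n s t ∧
      IsArcSweep m n node C i d s t := by
  obtain ⟨t, hst, ht⟩ := exists_isSweep h.irrefl (ownPred m n node) hs (h.pairwise_arc i d)
  exact ⟨t, hst.mono (h.length_arc_le i d), ht⟩

namespace IsArcSweep

theorem node_last_eq (hsw : IsArcSweep m n node C i d s t) (h : IsOpenChain m n node k)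
    (hi : i ≤ m) (hj : j < m) (hji : j ≠ i) : t (node j (n - 1)) = s (node j (n - 1)) :=
  hsw.eq_of_notMem _ fun hmem => hji (h.eq_of_node_last_mem_arc hj hi hmem).symm

theorem not_disloyal (hsw : IsArcSweep m n node C i d s t) (h : IsOpenChain m n node k)
    (hj : j < m) (hne : t (node j 0) ≠ s (node j 0)) : ¬ Disloyal n node C t j := fun hdis => by
  have heq := hsw.eq_fav (node j 0) hne
  rw [h.ownPred_node_zero hj] at heq
  exact hdis.2 (heq (h.adj_node_zero hj) hdis.1)

theorem disloyal_of_disloyal (hsw : IsArcSweep m n node C i d s t) (h : IsOpenChain m n node k)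
    (hj : j < m) (hlast : t (node j (n - 1)) = s (node j (n - 1))) (hdis : Disloyal n node C t j) :
    Disloyal n node C s j := by
  have hzero : t (node j 0) = s (node j 0) := by
    by_contra hne
    exact hsw.not_disloyal h hj hne hdis
  rwa [Disloyal, ← hlast, ← hzero]

theorem unstable_cases (hsw : IsArcSweep m n node C i d s t) (h : IsOpenChain m n node k)
    (hi : i ≤ m) (hu : Unstable (chainAdj m n node) C t x) :
    x ∉ arc m n node i d ∧ (Unstable (chainAdj m n node) C s x ∨
      (i < m ∧ x = node i 0 ∧ t (node i (n - 1)) ≠ s (node i (n - 1))) ∨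
      ∃ j, i = j + 1 ∧ x = node j 1) := by
  obtain ⟨hx, hcase⟩ := hsw.unstable hu
  refine ⟨hx, hcase.imp_right ?_⟩
  rintro ⟨p, hp, hpx, hne⟩
  obtain ⟨hi, rfl, rfl⟩ | hlink := h.eq_of_adj_of_mem_arc hi hp hx hpx
  · exact .inl ⟨hi, rfl, hne⟩
  · exact .inr hlink

end IsArcSweep

/-- The cycles with a disloyal first node, together with the cycle `j`. Here `j` is the cycle whose
first node has possibly just become unstable, and `j = m` stands for no such cycle. -/
noncomputable def excited (m n : ℕ) (node : ℕ → ℕ → V) (C : V → Finset M) (s : V → M) (j : ℕ) :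
    Finset ℕ :=
  {i ∈ Finset.range m | Disloyal n node C s i ∨ i = j}

/-- Excited cycles weighted by their distance to the end of the chain: passing excitation on to the
next cycle lowers the potential. -/
noncomputable def potential (m n : ℕ) (node : ℕ → ℕ → V) (C : V → Finset M) (s : V → M) (j : ℕ) :
    ℕ :=
  ∑ i ∈ excited m n node C s j, (m - i)

theorem mem_excited : i ∈ excited m n node C s j ↔ i < m ∧ (Disloyal n node C s i ∨ i = j) := by
  simp only [excited, Finset.mem_filter, Finset.mem_range]

theorem potential_le_sq (m n : ℕ) (node : ℕ → ℕ → V) (C : V → Finset M) (s : V → M) (j : ℕ) :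
    potential m n node C s j ≤ m ^ 2 :=
  calc potential m n node C s j
      ≤ ∑ i ∈ Finset.range m, (m - i) :=
        Finset.sum_le_sum_of_subset (Finset.filter_subset _ _)
    _ ≤ ∑ _i ∈ Finset.range m, m := Finset.sum_le_sum fun i _ => Nat.sub_le m i
    _ = m ^ 2 := by rw [Finset.sum_const, Finset.card_range, smul_eq_mul, sq]

theorem IsArcSweep.potential_le (hsw : IsArcSweep m n node C i d s t) (h : IsOpenChain m n node k)
    (hi : i ≤ m) (hlast : t (node i (n - 1)) = s (node i (n - 1))) :
    potential m n node C t m ≤ potential m n node C s j := by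
  refine Finset.sum_le_sum_of_subset fun i' hi' => ?_
  obtain ⟨hi', hdis | rfl⟩ := mem_excited.1 hi'
  · refine mem_excited.2 ⟨hi', .inl (hsw.disloyal_of_disloyal h hi' ?_ hdis)⟩
    obtain rfl | hne := eq_or_ne i' i
    · exact hlast
    · exact hsw.node_last_eq h hi hi' hne
  · exact absurd hi' (lt_irrefl _)

theorem IsArcSweep.potential_lt (hsw : IsArcSweep m n node C (i + 1) d s t)
    (h : IsOpenChain m n node k) (hi : i ∈ excited m n node C s j)
    (hdis : ¬ Disloyal n node C t i) :
    potential m n node C t (i + 1) < potential m n node C s j := by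
  have him := (mem_excited.1 hi).1
  refine Finset.sum_lt_sum_of_subset_erase_union_singleton (d' := i + 1) hi (fun i' hi' => ?_)
    (by omega)
  obtain ⟨hi', hor⟩ := mem_excited.1 hi'
  obtain rfl | hne := eq_or_ne i' (i + 1)
  · exact Finset.mem_union_right _ (Finset.mem_singleton_self _)
  have hdis' := hor.resolve_right hne
  refine Finset.mem_union_left _ (Finset.mem_erase.2 ⟨?_, mem_excited.2 ⟨hi', .inl ?_⟩⟩)
  · rintro rfl
    exact hdis hdis'
  · exact hsw.disloyal_of_disloyal h hi' (hsw.node_last_eq h him hi' hne) hdis'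

/-- Instability is confined to the nodes `node i 1` of the first `R` cycles and to the first node of
the cycle `j`, which is to be ignored if `j = m`. -/
structure Settled (m n : ℕ) (node : ℕ → ℕ → V) (C : V → Finset M) (s : V → M) (R j : ℕ) :
    Prop where
  le : R ≤ m
  unstable : ∀ x, Unstable (chainAdj m n node) C s x →
    (∃ i < R, x = node i 1) ∨ (j ≤ R ∧ j < m ∧ x = node j 0)

theorem Settled.sweep_next {R : ℕ} (hset : Settled m n node C s R j) (h : IsOpenChain m n node k)
    (hj : j < m) (hu : Unstable (chainAdj m n node) C s (node j 0))
    (hsw : IsArcSweep m n node C (j + 1) (k j - 1) s t) :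
    Settled m n node C t (max R (j + 1)) (j + 1) ∧
      potential m n node C t (j + 1) < potential m n node C s j := by
  have hmem : node j 0 ∈ arc m n node (j + 1) (k j - 1) := by
    refine h.node_zero_mem_arc hj fun hj' => ?_
    obtain ⟨l, hk, -⟩ := h.exists_link_eq_succ hj'
    omega
  have hchanged : t (node j 0) ≠ s (node j 0) := fun heq =>
    hsw.not_unstable _ hmem (hu.congr heq fun p hp =>
      hsw.eq_of_notMem p (h.notMem_arc_of_adj_node_zero hj hp))
  refine ⟨⟨max_le hset.le hj, fun x hx => ?_⟩,
    hsw.potential_lt h (mem_excited.2 ⟨hj, .inr rfl⟩) (hsw.not_disloyal h hj hchanged)⟩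
  obtain ⟨hxl, hxs | ⟨hj', rfl, -⟩ | ⟨j', e, rfl⟩⟩ := hsw.unstable_cases h hj hx
  · obtain ⟨i, hi, rfl⟩ | ⟨-, -, rfl⟩ := hset.unstable x hxs
    · exact .inl ⟨i, lt_max_of_lt_left hi, rfl⟩
    · exact absurd hmem hxl
  · exact .inr ⟨le_max_right _ _, hj', rfl⟩
  · exact .inl ⟨j', lt_max_of_lt_right (by omega), rfl⟩

/-- A change at the end of the arc has travelled all the way from its start. Each changed node
copies a predecessor; if all copy their predecessor on the cycle, the cycle becomes monochromatic,
and otherwise the node shared with the previous cycle `j` has become loyal. -/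
theorem IsArcSweep.isMono_or_disloyal (hsw : IsArcSweep m n node C i 0 s t)
    (h : IsOpenChain m n node k) (ht : Valid C t) (hi : i < m)
    (hst : ∀ l, l + 2 < n → ¬ Unstable (chainAdj m n node) C s (node i (l + 2)))
    (hlast : t (node i (n - 1)) ≠ s (node i (n - 1))) :
    IsMono n node t i ∨ ∃ j, i = j + 1 ∧ Disloyal n node C s j ∧ ¬ Disloyal n node C t j := by
  have hn := h.three_le
  have hchanged : ∀ l, l + 1 < n → t (node i (l + 1)) ≠ s (node i (l + 1)) := by
    intro l hl
    refine Nat.decreasingInduction' (P := fun l => t (node i l) ≠ s (node i l)) (m := l + 1)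
      (n := n - 1) (fun l hl hle hne => ?_) (by omega) hlast
    obtain ⟨l, rfl⟩ := Nat.exists_eq_succ_of_ne_zero (Nat.ne_zero_of_lt hle)
    obtain ⟨p, hp, hpne⟩ := hsw.exists_changed_of_adj ht hne (hst l (by omega))
    obtain rfl | ⟨j, rfl, -, rfl⟩ := (h.adj_node_succ_iff hi (by omega)).1 hp
    · exact hpne
    · exact absurd (hsw.node_last_eq h hi.le (by omega) j.succ_ne_self.symm) hpne
  refine or_iff_not_imp_right.2 fun hcon => isMono_of_forall_succ fun l hl => ?_
  obtain ⟨p, hp, hpt⟩ := hsw.exists_supporter _ (hchanged l hl)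
  obtain rfl | ⟨j, rfl, hk, rfl⟩ := (h.adj_node_succ_iff hi hl).1 hp
  · exact hpt
  · refine absurd ⟨j, rfl, ?_, ?_⟩ hcon
    all_goals
      have hne := hchanged l hl
      rw [hk, ← h.node_zero_eq hi] at hne hpt
    · have heq := hsw.node_last_eq h hi.le (by omega) j.succ_ne_self.symm
      exact ⟨heq ▸ hpt ▸ ht _, fun e => hne (by rw [e, ← heq, hpt])⟩
    · exact hsw.not_disloyal h (by omega) hne

theorem IsArcSweep.settled_or_isMono (hsw : IsArcSweep m n node C i 0 s t)
    (h : IsOpenChain m n node k) (ht : Valid C t) (hi : i < m)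
    (hus : ∀ x, Unstable (chainAdj m n node) C s x → ∃ i' < i + 1, x = node i' 1) (j : ℕ) :
    (∃ j', Settled m n node C t i j' ∧ potential m n node C t j' ≤ potential m n node C s j) ∨
      (IsMono n node t i ∧ t (node i (n - 1)) ≠ s (node i (n - 1))) := by
  have hn := h.three_le
  have hut : ∀ x, Unstable (chainAdj m n node) C t x →
      (∃ i' < i, x = node i' 1) ∨ (x = node i 0 ∧ t (node i (n - 1)) ≠ s (node i (n - 1))) := by
    intro x hx
    obtain ⟨hxl, hxs | ⟨-, hx⟩ | ⟨i', rfl, rfl⟩⟩ := hsw.unstable_cases h hi.le hx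
    · obtain ⟨i', hi', rfl⟩ := hus x hxs
      refine .inl ⟨i', (Nat.le_of_lt_succ hi').lt_of_ne ?_, rfl⟩
      rintro rfl
      exact hxl (node_mem_arc hi Nat.one_pos (by omega))
    · exact .inr hx
    · exact .inl ⟨i', i'.lt_succ_self, rfl⟩
  by_cases hlast : t (node i (n - 1)) = s (node i (n - 1))
  · exact .inl ⟨m, ⟨hi.le, fun x hx => .inl ((hut x hx).resolve_right fun hx => hx.2 hlast)⟩,
      hsw.potential_le h hi.le hlast⟩
  have hst : ∀ l, l + 2 < n → ¬ Unstable (chainAdj m n node) C s (node i (l + 2)) := by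
    intro l hl hu
    obtain ⟨i', hi', e⟩ := hus _ hu
    rcases h.eq_or_link hi hl (by omega) (by omega) e with e | e | e <;> omega
  obtain hmono | ⟨j', rfl, hdis, hdis'⟩ := hsw.isMono_or_disloyal h ht hi hst hlast
  · exact .inr ⟨hmono, hlast⟩
  · exact .inl ⟨j' + 1, ⟨hi.le, fun x hx => (hut x hx).imp_right fun hx => ⟨le_rfl, hi, hx.1⟩⟩,
      (hsw.potential_lt h (mem_excited.2 ⟨by omega, .inl hdis⟩) hdis').le⟩

variable [Fintype V]

theorem Settled.exists_step {R : ℕ} (hset : Settled m n node C s R j)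
    (h : IsOpenChain m n node k) (hs : Valid C s) (hu : ∃ x, Unstable (chainAdj m n node) C s x) :
    ∃ t, ReachesWithin (Deviates (chainAdj m n node) C) n s t ∧
      (discordantCycles m n node t ⊂ discordantCycles m n node s ∨
        ∃ R' j', Settled m n node C t R' j' ∧
          R' + 2 * potential m n node C t j' < R + 2 * potential m n node C s j) := by
  have hn := h.three_le
  by_cases hj : j ≤ R ∧ j < m ∧ Unstable (chainAdj m n node) C s (node j 0)
  · obtain ⟨hjR, hjm, hju⟩ := hj
    obtain ⟨t, hst, hsw⟩ := h.exists_isArcSweep hs (j + 1) (k j - 1)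
    obtain ⟨hset', hlt⟩ := hset.sweep_next h hjm hju hsw
    exact ⟨t, hst, .inr ⟨_, _, hset', by omega⟩⟩
  have hus : ∀ x, Unstable (chainAdj m n node) C s x → ∃ i < R, x = node i 1 := fun x hx =>
    (hset.unstable x hx).resolve_right fun ⟨hjR, hjm, e⟩ => hj ⟨hjR, hjm, e ▸ hx⟩
  obtain ⟨x, hx⟩ := hu
  obtain ⟨R, rfl⟩ : ∃ i, R = i + 1 := by
    obtain ⟨i, hi, -⟩ := hus x hx
    exact Nat.exists_eq_add_one.2 (Nat.zero_lt_of_lt hi)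
  obtain ⟨t, hst, hsw⟩ := h.exists_isArcSweep hs R 0
  obtain ⟨j', hset', hle⟩ | ⟨hmono, hne⟩ :=
    hsw.settled_or_isMono h (hst.valid hs) hset.le hus j
  · exact ⟨t, hst, .inr ⟨R, j', hset', by omega⟩⟩
  · exact ⟨t, hst, .inl (h.discordantCycles_ssubset hst hset.le hmono (by omega) hne)⟩

theorem Settled.exists_progress {R N : ℕ} (hset : Settled m n node C s R j)
    (h : IsOpenChain m n node k) (hs : Valid C s) (hN : R + 2 * potential m n node C s j < N) :
    ∃ t, ReachesWithin (Deviates (chainAdj m n node) C) (n * N) s t ∧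
      (discordantCycles m n node t ⊂ discordantCycles m n node s ∨
        ∀ x, ¬ Unstable (chainAdj m n node) C t x) := by
  induction N generalizing s R j with
  | zero => exact absurd hN (Nat.not_lt_zero _)
  | succ N ih =>
    by_cases hu : ∃ x, Unstable (chainAdj m n node) C s x
    · obtain ⟨t, hst, hprog | ⟨R', j', hset', hlt⟩⟩ := hset.exists_step h hs hu
      · exact ⟨t, hst.mono (Nat.le_mul_of_pos_right n N.succ_pos), .inl hprog⟩
      obtain ⟨u, htu, hu⟩ := ih hset' (hst.valid hs) (by omega)
      exact ⟨u, (hst.trans htu).mono (by rw [Nat.mul_succ, add_comm]),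
        hu.imp_left fun hsub => hsub.trans_subset (h.discordantCycles_subset hst)⟩
    · exact ⟨s, .refl _ s, .inr (not_exists.1 hu)⟩

namespace IsOpenChain

theorem exists_settled (h : IsOpenChain m n node k) (hs : Valid C s) :
    ∃ t, ReachesWithin (Deviates (chainAdj m n node) C) (n * (m + 1)) s t ∧
      Settled m n node C t m m := by
  have hsweeps : ∀ T ≤ m + 1, ∃ t, ReachesWithin (Deviates (chainAdj m n node) C) (n * T) s t ∧
      ∀ x, Unstable (chainAdj m n node) C t x →
        (∃ j < m, x = node j 1) ∨ ∃ i, T ≤ i ∧ i ≤ m ∧ x ∈ arc m n node i 0 := by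
    intro T hT
    induction T with
    | zero =>
      refine ⟨s, .refl _ s, fun x _ => .inr ?_⟩
      obtain ⟨i, l, hi, hl, rfl⟩ | rfl := h.exists_node_eq x
      · exact ⟨i, i.zero_le, hi.le, node_mem_arc hi l.succ_pos hl⟩
      · exact ⟨m, m.zero_le, le_rfl, (mem_arc le_rfl).2 (.inr ⟨rfl, rfl⟩)⟩
    | succ T ih =>
      have hTm := Nat.le_of_succ_le_succ hT
      obtain ⟨u, hsu, hu⟩ := ih (by omega)
      obtain ⟨t, hut, hsw⟩ := h.exists_isArcSweep (hsu.valid hs) T 0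
      refine ⟨t, (hsu.trans hut).mono (Nat.mul_succ n T).ge, fun x hx => ?_⟩
      obtain ⟨hxl, hxu | ⟨hTm, rfl, -⟩ | ⟨j, rfl, rfl⟩⟩ := hsw.unstable_cases h hTm hx
      · refine (hu x hxu).imp_right fun ⟨i, hTi, him, hxi⟩ => ⟨i, hTi.lt_of_ne ?_, him, hxi⟩
        rintro rfl
        exact hxl hxi
      · exact .inr ⟨T + 1, le_rfl, hTm, h.node_zero_mem_arc hTm fun hT => (h.2.2.1 T hT).1⟩
      · exact .inl ⟨j, hTm, rfl⟩
  obtain ⟨t, hst, ht⟩ := hsweeps (m + 1) le_rfl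
  exact ⟨t, hst, le_rfl, fun x hx => .inl ((ht x hx).resolve_right fun ⟨i, hmi, him, _⟩ =>
    (hmi.trans him).not_gt m.lt_succ_self)⟩

theorem exists_progress_or_isStrong (h : IsOpenChain m n node k) (hs : Valid C s) :
    ∃ t, ReachesWithin (Deviates (chainAdj m n node) C) (4 * n * m ^ 2) s t ∧
      (discordantCycles m n node t ⊂ discordantCycles m n node s ∨
        IsStrong (chainAdj m n node) (fun _ _ => 1) (fun _ _ => 0) C t) := by
  have hlen : n * (m + 1) + n * (m + 2 * m ^ 2 + 1) + 1 ≤ 4 * n * m ^ 2 := by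
    nlinarith [h.1, h.three_le, Nat.mul_le_mul_left n (Nat.mul_le_mul_right m h.1)]
  obtain ⟨u, hsu, hset⟩ := h.exists_settled hs
  have hmeasure : m + 2 * potential m n node C u m < m + 2 * m ^ 2 + 1 := by
    have := potential_le_sq m n node C u m
    omega
  obtain ⟨t, hut, hprog⟩ := hset.exists_progress h (hsu.valid hs) hmeasure
  have hst := hsu.trans hut
  obtain hprog | hstable := hprog
  · exact ⟨t, hst.mono (by omega), .inl (hprog.trans_subset (h.discordantCycles_subset hsu))⟩
  by_cases hstrong : IsStrong (chainAdj m n node) (fun _ _ => 1) (fun _ _ => 0) C t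
  · exact ⟨t, hst.mono (by omega), .inr hstrong⟩
  obtain ⟨t', hd⟩ : ∃ t', Deviates (chainAdj m n node) C t t' := by
    by_contra! hcon
    exact hstrong ⟨hst.valid hs, hcon⟩
  exact ⟨t', (hst.trans (.single hd)).mono hlen, .inl
    ((h.discordantCycles_ssubset_of_deviates hstable hd).trans_subset
      (h.discordantCycles_subset hst))⟩

theorem exists_isStrong (h : IsOpenChain m n node k) (hs : Valid C s) :
    ∃ t, ReachesWithin (Deviates (chainAdj m n node) C)
        (4 * n * m ^ 2 * (discordantCycles m n node s).card) s t ∧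
      IsStrong (chainAdj m n node) (fun _ _ => 1) (fun _ _ => 0) C t := by
  induction hD : discordantCycles m n node s using Finset.strongInduction generalizing s with
  | H D ih =>
    subst hD
    obtain hempty | hne := (discordantCycles m n node s).eq_empty_or_nonempty
    · exact ⟨s, .refl _ s, h.isStrong_of_discordantCycles_eq_empty hs hempty⟩
    obtain ⟨t, hst, hsub | ht⟩ := h.exists_progress_or_isStrong hs
    · obtain ⟨u, htu, hu⟩ := ih _ hsub (hst.valid hs) rfl
      refine ⟨u, (hst.trans htu).mono ?_, hu⟩
      rw [add_comm, ← Nat.mul_succ]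
      exact Nat.mul_le_mul_left _ (Finset.card_lt_card hsub)
    · exact ⟨t, hst.mono (Nat.le_mul_of_pos_right _ hne.card_pos), ht⟩

end IsOpenChain

end Chain

theorem open_chain_cimprovement_path_general {V M : Type} [Fintype V] {m n : ℕ}
    {node : ℕ → ℕ → V} {k : ℕ → ℕ} (h : IsOpenChain m n node k) {C : V → Finset M} {s : V → M}
    (hs : Valid C s) :
    ∃ L ≤ 4 * n * m ^ 3, CImpPath (chainAdj m n node) (fun _ _ => 1) (fun _ _ => 0) C s L := by
  obtain ⟨t, hst, ht⟩ := h.exists_isStrong hs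
  have hcard : (discordantCycles m n node s).card ≤ m :=
    (Finset.card_filter_le _ _).trans_eq (Finset.card_range m)
  refine (hst.mono ?_).exists_cImpPath ht
  rw [pow_succ m 2, ← mul_assoc]
  exact Nat.mul_le_mul_left _ hcard

/-- There is a constant `c` such that every coordination game without bonuses
on an unweighted open chain of `m` cycles, each cycle having `n` nodes,
admits, from every joint strategy, a finite c-improvement path of length at
most `c * n * m ^ 3` ending in a strong equilibrium. -/
theorem open_chain_cimprovement_path :
    ∃ c : ℕ,
      ∀ (V : Type) [Fintype V] (M : Type) [Fintype M],
      ∀ (m n : ℕ) (node : ℕ → ℕ → V) (k : ℕ → ℕ),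
        IsOpenChain m n node k →
      ∀ (C : V → Finset M), (∀ i, (C i).Nonempty) →
      ∀ s : V → M, Valid C s →
        ∃ L, L ≤ c * n * m ^ 3 ∧
          CImpPath (chainAdj m n node) (fun _ _ => 1) (fun _ _ => 0) C s L := by
  exact ⟨4, fun V _ M _ m n node k h C _ s hs => open_chain_cimprovement_path_general h hs⟩

end CG
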